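/- Let N ≥ 1 and let v ∈ ℝ^N have first component v_1 = 1/2. Then for every real q with 0 < q < 1: ∑ over k ∈ ℤ^N with k_1 + … + k_N even of q^((1/2)·∑_{i=1}^N (v_i+k_i)²) equals one half of the sum over all k ∈ ℤ^N of q^((1/2)·∑_{i=1}^N (v_i+k_i)²). Equivalently, Θ_{D_N}(v;q) = (1/2)·Θ_{B_N}(v;q) whenever some component of v equals 1/2. -/

import Mathlib

open scoped BigOperators

/-!
Suppose `v i = m + 1/2` with `m` an integer. The map `k i ↦ -(2 * m + 1) - k i`, fixing the other
coordinates, replaces `v i + k i` by its negative, so it leaves every term of the theta series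
unchanged. It changes `∑ j, k j` by an odd integer, so it exchanges the vectors `k` of even sum with
those of odd sum: both classes contribute equally to the absolutely convergent series over all `k`.
-/

theorem hasSum_two_nsmul_of_subtype_of_perm {α M : Type*} [AddCommMonoid M] [TopologicalSpace M]
    [ContinuousAdd M] {f : α → M} {p : α → Prop} {a : M} (e : Equiv.Perm α)
    (hf : ∀ x, f (e x) = f x) (hp : ∀ x, p x ↔ ¬ p (e x))
    (ha : HasSum (fun x : {x // p x} => f x) a) : HasSum f (2 • a) := by
  let e' : {x // p x} ≃ {x // ¬ p x} := e.subtypeEquiv hp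
  have ha' : HasSum (fun x : {x // ¬ p x} => f x) a :=
    e'.hasSum_iff.mp (ha.congr_fun fun x => hf x)
  rw [two_nsmul]
  exact HasSum.add_compl (s := {x | p x}) ha ha'

theorem summable_pi_prod_of_nonneg {ι : Type*} [Fintype ι] {α : ι → Type*}
    {f : ∀ i, α i → ℝ} (hf₀ : ∀ i a, 0 ≤ f i a) (hf : ∀ i, Summable (f i)) :
    Summable fun k : ∀ i, α i => ∏ i, f i (k i) := by
  classical
  have hprod_nonneg (k : ∀ i, α i) : 0 ≤ ∏ i, f i (k i) :=
    Finset.prod_nonneg fun i _ => hf₀ i (k i)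
  refine summable_of_sum_le (c := ∏ i, ∑' a, f i a) hprod_nonneg fun u => ?_
  let box : ∀ i, Finset (α i) := fun i => u.image fun k => k i
  have hu : u ⊆ Fintype.piFinset box := fun k hk =>
    Fintype.mem_piFinset.mpr fun i => Finset.mem_image_of_mem (fun k => k i) hk
  calc ∑ k ∈ u, ∏ i, f i (k i)
      ≤ ∑ k ∈ Fintype.piFinset box, ∏ i, f i (k i) :=
        Finset.sum_le_sum_of_subset_of_nonneg hu fun k _ _ => hprod_nonneg k
    _ = ∏ i, ∑ a ∈ box i, f i a := (Finset.prod_univ_sum box f).symm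
    _ ≤ ∏ i, ∑' a, f i a :=
        Finset.prod_le_prod (fun i _ => Finset.sum_nonneg fun a _ => hf₀ i a)
          fun i _ => (hf i).sum_le_tsum (box i) fun a _ => hf₀ i a

/-- The summand `q ^ ((v + k)² / 2)`, for `k` in `ℤ^ι`, of the theta series of the lattices of types
`B` and `D` shifted by `v`. -/
noncomputable def thetaTerm {ι : Type*} [Fintype ι] (q : ℝ) (v : ι → ℝ) (k : ι → ℤ) : ℝ :=
  q ^ ((1 / 2 : ℝ) * ∑ i, (v i + (k i : ℝ)) ^ 2)

theorem summable_rpow_half_mul_sq {q : ℝ} (hq0 : 0 < q) (hq1 : q < 1) (x : ℝ) :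
    Summable fun n : ℤ => q ^ ((1 / 2 : ℝ) * (x + (n : ℝ)) ^ 2) := by
  have ht : 0 < -Real.log q / (2 * Real.pi) :=
    div_pos (neg_pos.mpr (Real.log_neg hq0 hq1)) Real.two_pi_pos
  refine (HurwitzZeta.hasSum_int_evenKernel x ht).summable.congr fun n => ?_
  rw [Real.rpow_def_of_pos hq0]
  congr 1
  field_simp
  ring

theorem summable_thetaTerm {ι : Type*} [Fintype ι] {q : ℝ} (hq0 : 0 < q) (hq1 : q < 1)
    (v : ι → ℝ) : Summable (thetaTerm q v) := by
  have hprod := summable_pi_prod_of_nonneg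
    (fun i (n : ℤ) => Real.rpow_nonneg hq0.le ((1 / 2 : ℝ) * (v i + (n : ℝ)) ^ 2))
    (fun i => summable_rpow_half_mul_sq hq0 hq1 (v i))
  refine hprod.congr fun k => ?_
  rw [thetaTerm, Finset.mul_sum, Real.rpow_sum_of_pos hq0]

/-- The reflection of `ℤ^ι` in the hyperplane `k i = c / 2`, for `c` possibly odd; it exchanges the
even-sum and odd-sum vectors when `c` is odd. -/
def coordReflection {ι : Type*} [DecidableEq ι] (i : ι) (c : ℤ) : Equiv.Perm (ι → ℤ) :=
  Function.Involutive.toPerm (fun k => Function.update k i (c - k i)) fun k => by simp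

section CoordReflection

variable {ι : Type*} [DecidableEq ι]

theorem coordReflection_apply (i : ι) (c : ℤ) (k : ι → ℤ) :
    coordReflection i c k = Function.update k i (c - k i) :=
  rfl

variable [Fintype ι]

theorem sum_coordReflection (i : ι) (c : ℤ) (k : ι → ℤ) :
    ∑ j, coordReflection i c k j = ∑ j, k j + (c - 2 * k i) := by
  rw [coordReflection_apply, Finset.sum_update_of_mem (Finset.mem_univ i),
    Finset.sum_eq_add_sum_sdiff_singleton_of_mem (Finset.mem_univ i) k]
  ring

theorem even_sum_iff_not_even_sum_coordReflection (i : ι) {c : ℤ} (hc : Odd c) (k : ι → ℤ) :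
    Even (∑ j, k j) ↔ ¬ Even (∑ j, coordReflection i c k j) := by
  have hodd : Odd (c - 2 * k i) := hc.sub_even (even_two_mul (k i))
  rw [sum_coordReflection, Int.even_add]
  simp [Int.not_even_iff_odd.mpr hodd]

theorem thetaTerm_coordReflection (q : ℝ) {v : ι → ℝ} {i : ι} {c : ℤ} (hc : (c : ℝ) = -(2 * v i))
    (k : ι → ℤ) : thetaTerm q v (coordReflection i c k) = thetaTerm q v k := by
  have hsq (j : ι) : (v j + (coordReflection i c k j : ℝ)) ^ 2 = (v j + (k j : ℝ)) ^ 2 := by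
    rw [coordReflection_apply]
    rcases eq_or_ne j i with rfl | hj
    · rw [Function.update_self, Int.cast_sub, hc]
      ring
    · rw [Function.update_of_ne hj]
  simp only [thetaTerm, hsq]

end CoordReflection

theorem stmt4_general {ι : Type*} [Fintype ι] {v : ι → ℝ} {i : ι} {m : ℤ}
    (hv : v i = m + 1 / 2) {q : ℝ} (hq0 : 0 < q) (hq1 : q < 1) :
    (∑' k : {k : ι → ℤ // Even (∑ j, k j)}, q ^ ((1 / 2 : ℝ) * ∑ j, (v j + (k.1 j : ℝ)) ^ 2)) =
      (1 / 2) * ∑' k : ι → ℤ, q ^ ((1 / 2 : ℝ) * ∑ j, (v j + (k j : ℝ)) ^ 2) := by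
  classical
  change ∑' k : {k : ι → ℤ // Even (∑ j, k j)}, thetaTerm q v k = (1 / 2) * ∑' k, thetaTerm q v k
  have hodd : Odd (-(2 * m + 1)) := (odd_two_mul_add_one m).neg
  have hcast : ((-(2 * m + 1) : ℤ) : ℝ) = -(2 * v i) := by
    rw [hv]
    push_cast
    ring
  have heven := ((summable_thetaTerm hq0 hq1 v).subtype {k | Even (∑ j, k j)}).hasSum
  have hall := hasSum_two_nsmul_of_subtype_of_perm (coordReflection i (-(2 * m + 1)))
    (thetaTerm_coordReflection q hcast) (even_sum_iff_not_even_sum_coordReflection i hodd) heven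
  rw [hall.tsum_eq, nsmul_eq_mul, Nat.cast_ofNat, one_div, inv_mul_cancel_left₀ two_ne_zero]
  rfl

/-- `Θ_{D_N}(v;q) = (1/2)·Θ_{B_N}(v;q)` whenever a component of `v` equals `1/2`. -/
theorem stmt4 (N : ℕ) (hN : 1 ≤ N) (v : Fin N → ℝ) (hv : v ⟨0, hN⟩ = 1 / 2)
    (q : ℝ) (hq0 : 0 < q) (hq1 : q < 1) :
    (∑' k : {k : Fin N → ℤ // Even (∑ i, k i)},
        q ^ ((1 / 2 : ℝ) * ∑ i : Fin N, (v i + (k.1 i : ℝ)) ^ 2)) =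
      (1 / 2) * ∑' k : Fin N → ℤ,
        q ^ ((1 / 2 : ℝ) * ∑ i : Fin N, (v i + (k i : ℝ)) ^ 2) :=
  stmt4_general (m := 0) (by simpa using hv) hq0 hq1
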